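/- Fix an integer s ≥ 1 and a sequence p : ℕ → ℕ with p(n) → ∞ and p(n)/n → 0 as n → ∞. Then (1/p(n))·E[tr(Y^{−s})] → 1 as n → ∞, where the expectation is with respect to μ_{n,p(n)}. -/

import Mathlib

open MeasureTheory Matrix Filter

noncomputable section

/-- The law `μ_{n,p}` of an `n × p` matrix with independent standard Gaussian entries. -/
def gaussEnsemble (n p : ℕ) : Measure (Fin n → Fin p → ℝ) :=
  Measure.pi fun _ => Measure.pi fun _ => ProbabilityTheory.gaussianReal 0 1

/-- `Y(Z) = (1/n) Zᵀ Z`, the Wishart matrix `W_p(n, I_p/n)` built from the Gaussian matrix `Z`. -/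
def wishartOf {n p : ℕ} (Z : Fin n → Fin p → ℝ) : Matrix (Fin p) (Fin p) ℝ :=
  (n : ℝ)⁻¹ • ((Matrix.of Z)ᵀ * Matrix.of Z)


/-- entrywise derivative of a matrix-valued curve -/
def MD {m n : ℕ} (f : ℝ → Matrix (Fin m) (Fin n) ℝ) (f' : Matrix (Fin m) (Fin n) ℝ) (t : ℝ) : Prop :=
  ∀ i j, HasDerivAt (fun u => f u i j) (f' i j) t

theorem MD.mul {m n l : ℕ} {f : ℝ → Matrix (Fin m) (Fin n) ℝ} {f'} {g : ℝ → Matrix (Fin n) (Fin l) ℝ} {g'}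
    {t : ℝ} (hf : MD f f' t) (hg : MD g g' t) :
    MD (fun u => f u * g u) (f' * g t + f t * g') t := by
  intro i j
  simp only [Matrix.mul_apply, Matrix.add_apply, ← Finset.sum_add_distrib]
  exact HasDerivAt.fun_sum fun k _ => (hf i k).mul (hg k j)

theorem MD.add_const {m n : ℕ} {f : ℝ → Matrix (Fin m) (Fin n) ℝ} {f'} {t : ℝ} (hf : MD f f' t) (c) :
    MD (fun u => f u + c) f' t := by
  intro i j
  simpa using (hf i j).add_const (c i j)

theorem MD.transpose {m n : ℕ} {f : ℝ → Matrix (Fin m) (Fin n) ℝ} {f'} {t : ℝ} (hf : MD f f' t) :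
    MD (fun u => (f u)ᵀ) f'ᵀ t := fun i j => hf j i

theorem MD.unique {m n : ℕ} {f : ℝ → Matrix (Fin m) (Fin n) ℝ} {f' g'} {t : ℝ} (hf : MD f f' t)
    (hg : MD f g' t) : f' = g' := by
  ext i j; exact (hf i j).unique (hg i j)

theorem MD.det {n : ℕ} {f : ℝ → Matrix (Fin n) (Fin n) ℝ} {t : ℝ}
    (hf : ∀ i j, DifferentiableAt ℝ (fun u => f u i j) t) : DifferentiableAt ℝ (fun u => (f u).det) t := by
  simp only [Matrix.det_apply]
  fun_prop

theorem MD.inv {n : ℕ} {f : ℝ → Matrix (Fin n) (Fin n) ℝ} {f'} {t : ℝ} (hf : MD f f' t)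
    (hu : ∀ u, IsUnit (f u).det) :
    MD (fun u => (f u)⁻¹) (-((f t)⁻¹ * f' * (f t)⁻¹)) t := by
  have hd : ∀ i j, DifferentiableAt ℝ (fun u => f u i j) t := fun i j => (hf i j).differentiableAt
  have h1 : ∀ i j, DifferentiableAt ℝ (fun u => (f u)⁻¹ i j) t := by
    intro i j
    simp only [Matrix.inv_def, Matrix.smul_apply, smul_eq_mul, Ring.inverse_eq_inv', Matrix.adjugate_apply]
    refine (DifferentiableAt.inv (MD.det hd) (hu t).ne_zero).mul (MD.det ?_)
    intro a b
    by_cases h : a = j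
    · subst h; simp
    · simpa [Matrix.updateRow_ne h] using hd a b
  set g' : Matrix (Fin n) (Fin n) ℝ := fun i j => deriv (fun u => (f u)⁻¹ i j) t
  have hg : MD (fun u => (f u)⁻¹) g' t := fun i j => (h1 i j).hasDerivAt
  have h2 := hf.mul hg
  have h3 : MD (fun u => f u * (f u)⁻¹) 0 t := by
    intro i j
    have : (fun u => (f u * (f u)⁻¹) i j) = fun _ => (1 : Matrix (Fin n) (Fin n) ℝ) i j := by
      ext u; rw [Matrix.mul_nonsing_inv _ (hu u)]
    rw [this]; exact hasDerivAt_const _ _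
  have h4 := h2.unique h3
  have h5 : g' = -((f t)⁻¹ * f' * (f t)⁻¹) := by
    have : (f t)⁻¹ * (f t * g') = g' := by rw [← Matrix.mul_assoc, Matrix.nonsing_inv_mul _ (hu t), Matrix.one_mul]
    rw [← this, eq_neg_of_add_eq_zero_right h4]; simp [Matrix.mul_assoc]
  rw [← h5]; exact hg

theorem MD.pow {n : ℕ} {f : ℝ → Matrix (Fin n) (Fin n) ℝ} {V} {t : ℝ} (hf : MD f (-(f t * V * f t)) t) (k : ℕ) :
    MD (fun u => f u ^ k) (-∑ r ∈ Finset.range k, f t ^ (r+1) * V * f t ^ (k - r)) t := by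
  induction k with
  | zero => intro i j; simpa using hasDerivAt_const t _
  | succ k ih =>
    have := ih.mul hf
    simp only [pow_succ (f _) k]
    convert this using 1
    rw [Finset.sum_range_succ, neg_add, neg_mul, Finset.sum_mul]
    congr 1
    · congr 1
      refine Finset.sum_congr rfl fun r hr => ?_
      have : k + 1 - r = k - r + 1 := by have := Finset.mem_range.1 hr; omega
      rw [this, pow_succ (f t) (k - r)]; simp only [Matrix.mul_assoc]
    · simp [pow_succ, Matrix.mul_assoc]

theorem stein1 (f f' : ℝ → ℝ) (hd : ∀ t, HasDerivAt f (f' t) t) (C : ℝ) (hf : ∀ t, |f t| ≤ C)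
    (hf' : ∀ t, |f' t| ≤ C) (hm : Measurable f') :
    ∫ t, (t * f t - f' t) ∂(ProbabilityTheory.gaussianReal 0 1) = 0 := by
  rw [ProbabilityTheory.integral_gaussianReal_eq_integral_smul (by simp)]
  set φ := ProbabilityTheory.gaussianPDFReal 0 1 with hφ
  have hφd : ∀ t, HasDerivAt φ (-t * φ t) t := by
    intro t
    rw [hφ]; unfold ProbabilityTheory.gaussianPDFReal
    have h : HasDerivAt (fun x : ℝ => -(x - 0) ^ 2 / (2 * ((1 : NNReal) : ℝ))) (-t) t := by
      have h0 := (((hasDerivAt_id' t).fun_pow 2).fun_neg).div_const 2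
      have e : (fun x : ℝ => -(x - 0) ^ 2 / (2 * ((1 : NNReal) : ℝ))) = fun x => -x ^ 2 / 2 := by
        ext x; simp
      rw [e]
      have e2 : -t = -(((2 : ℕ) : ℝ) * t ^ (2 - 1) * 1) / 2 := by norm_num; ring
      rw [e2]
      exact h0
    have h1 := (h.exp).const_mul ((√(2 * Real.pi * ((1 : NNReal) : ℝ)))⁻¹)
    have e : -t * ((√(2 * Real.pi * ((1 : NNReal) : ℝ)))⁻¹ * Real.exp (-(t - 0) ^ 2 / (2 * ((1 : NNReal) : ℝ))))
      = (√(2 * Real.pi * ((1 : NNReal) : ℝ)))⁻¹ * (Real.exp (-(t - 0) ^ 2 / (2 * ((1 : NNReal) : ℝ))) * -t) := by ring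
    rw [e]
    exact h1
  have hφi : Integrable φ := ProbabilityTheory.integrable_gaussianPDFReal 0 1
  have hc : Continuous f := continuous_iff_continuousAt.2 fun t => (hd t).continuousAt
  have hti : Integrable (fun t => t * φ t) := by
    have := ProbabilityTheory.memLp_id_gaussianReal (μ := 0) (v := 1) 1
    have := this.integrable (by simp)
    rw [ProbabilityTheory.gaussianReal_of_var_ne_zero _ (by simp)] at this
    rw [integrable_withDensity_iff (by fun_prop) (by simp [ProbabilityTheory.gaussianPDF])] at this
    simpa [ProbabilityTheory.toReal_gaussianPDF] using this
  have hd2 : ∀ t, HasDerivAt (fun t => f t * φ t) (f' t * φ t + f t * (-t * φ t)) t := fun t => (hd t).mul (hφd t)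
  have i1 : Integrable (fun t => f' t * φ t) := hφi.bdd_mul (c := C) hm.aestronglyMeasurable (ae_of_all _ (by simpa using hf'))
  have i2 : Integrable (fun t => f t * φ t) := hφi.bdd_mul (c := C) hc.aestronglyMeasurable (ae_of_all _ (by simpa using hf))
  have i3 : Integrable (fun t => f t * (t * φ t)) := hti.bdd_mul (c := C) hc.aestronglyMeasurable (ae_of_all _ (by simpa using hf))
  have := integral_eq_zero_of_hasDerivAt_of_integrable hd2 (i1.add (i3.neg.congr (ae_of_all _ fun t => by simp))) i2
  rw [← neg_zero, ← this, ← integral_neg]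
  congr 1; ext t; simp only [smul_eq_mul]; ring

theorem mp_update {ι : Type*} [Fintype ι] [DecidableEq ι] {X : ι → Type*} [∀ i, MeasurableSpace (X i)]
    (μ : ∀ i, Measure (X i)) [∀ i, IsProbabilityMeasure (μ i)] (i : ι) :
    MeasurePreserving (fun q : (∀ i, X i) × X i => Function.update q.1 i q.2)
      ((Measure.pi μ).prod (μ i)) (Measure.pi μ) := by
  have hm : Measurable (fun q : (∀ i, X i) × X i => Function.update q.1 i q.2) := by
    rw [measurable_pi_iff]; intro a
    by_cases h : a = i
    · subst h; simpa using measurable_snd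
    · simp only [Function.update_of_ne h]; fun_prop
  refine ⟨hm, ?_⟩
  refine (Measure.pi_eq fun s hs => ?_).symm
  rw [Measure.map_apply hm (MeasurableSet.univ_pi hs)]
  have : (fun q : (∀ i, X i) × X i => Function.update q.1 i q.2) ⁻¹' (Set.univ.pi s)
      = (Set.univ.pi (Function.update s i Set.univ)) ×ˢ (s i) := by
    ext q
    simp only [Set.mem_preimage, Set.mem_univ_pi, Set.mem_prod]
    constructor
    · intro h
      refine ⟨fun a => ?_, by simpa using h i⟩
      by_cases ha : a = i
      · subst ha; simp
      · simpa [ha] using h a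
    · rintro ⟨h1, h2⟩ a
      by_cases ha : a = i
      · subst ha; simpa using h2
      · simpa [ha] using h1 a
  rw [this, Measure.prod_prod, Measure.pi_pi, ← Finset.prod_erase_mul _ _ (Finset.mem_univ i),
    ← Finset.prod_erase_mul _ (fun i => μ i (s i)) (Finset.mem_univ i)]
  simp only [Function.update_self, measure_univ, mul_one]
  congr 1
  refine Finset.prod_congr rfl fun a ha => ?_
  rw [Function.update_of_ne (Finset.ne_of_mem_erase ha)]

theorem int_zero {ι : Type*} [Fintype ι] [DecidableEq ι] {X : ι → Type*} [∀ i, MeasurableSpace (X i)]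
    (μ : ∀ i, Measure (X i)) [∀ i, IsProbabilityMeasure (μ i)] (i : ι) (H : (∀ i, X i) → ℝ)
    (hH : Integrable H (Measure.pi μ)) (h0 : ∀ Z, ∫ x, H (Function.update Z i x) ∂(μ i) = 0) :
    ∫ Z, H Z ∂(Measure.pi μ) = 0 := by
  have h := mp_update μ i
  have h1 : Integrable (fun q : (∀ i, X i) × X i => H (Function.update q.1 i q.2)) ((Measure.pi μ).prod (μ i)) :=
    h.integrable_comp_of_integrable hH
  have h2 : ∫ Z, H Z ∂(Measure.pi μ) = ∫ q : (∀ i, X i) × X i, H (Function.update q.1 i q.2) ∂((Measure.pi μ).prod (μ i)) := by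
    rw [← h.map_eq, integral_map h.measurable.aemeasurable (by rw [h.map_eq]; exact hH.1), h.map_eq]
  rw [h2, integral_prod _ h1]; simp [h0]

/-- Gram matrix -/
noncomputable def Wm {n p : ℕ} (Z : Fin n → Fin p → ℝ) : Matrix (Fin p) (Fin p) ℝ := (Matrix.of Z)ᵀ * Matrix.of Z

/-- resolvent -/
noncomputable def Rm {n p : ℕ} (d : ℝ) (Z : Fin n → Fin p → ℝ) : Matrix (Fin p) (Fin p) ℝ :=
  (Wm Z + d • (1 : Matrix (Fin p) (Fin p) ℝ))⁻¹

theorem spec {n p : ℕ} (Z : Fin n → Fin p → ℝ) : ∃ l : Fin p → ℝ, (∀ i, 0 ≤ l i) ∧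
    Wm Z = Unitary.conjStarAlgAut ℝ _ ((Matrix.isHermitian_conjTranspose_mul_self (Matrix.of Z)).eigenvectorUnitary) (diagonal l) := by
  have h := Matrix.isHermitian_conjTranspose_mul_self (Matrix.of Z)
  refine ⟨h.eigenvalues, (Matrix.posSemidef_conjTranspose_mul_self (Matrix.of Z)).eigenvalues_nonneg, ?_⟩
  exact h.spectral_theorem

theorem trace_conj {p : ℕ} (U : Matrix.unitaryGroup (Fin p) ℝ) (A : Matrix (Fin p) (Fin p) ℝ) :
    Matrix.trace (Unitary.conjStarAlgAut ℝ _ U A) = Matrix.trace A := by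
  rw [Unitary.conjStarAlgAut_apply, Matrix.trace_mul_comm, ← Matrix.mul_assoc]
  simp

theorem inv_conj {p : ℕ} (U : Matrix.unitaryGroup (Fin p) ℝ) (l : Fin p → ℝ) (hl : ∀ i, l i ≠ 0) :
    IsUnit (Unitary.conjStarAlgAut ℝ _ U (diagonal l)).det ∧
    (Unitary.conjStarAlgAut ℝ _ U (diagonal l))⁻¹ = Unitary.conjStarAlgAut ℝ _ U (diagonal fun i => (l i)⁻¹) := by
  have : Unitary.conjStarAlgAut ℝ _ U (diagonal l) * Unitary.conjStarAlgAut ℝ _ U (diagonal fun i => (l i)⁻¹) = 1 := by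
    rw [← map_mul, diagonal_mul_diagonal]
    have : (fun i => l i * (l i)⁻¹) = fun _ => 1 := by ext i; exact mul_inv_cancel₀ (hl i)
    rw [this]; simp
  exact ⟨Matrix.isUnit_det_of_right_inverse this, Matrix.inv_eq_right_inv this⟩

theorem spec2 {n p : ℕ} (Z : Fin n → Fin p → ℝ) : ∃ l : Fin p → ℝ, (∀ i, 0 ≤ l i) ∧
    (Wm Z).trace = ∑ i, l i ∧
    (∀ d > 0, IsUnit (Wm Z + d • (1 : Matrix (Fin p) (Fin p) ℝ)).det ∧
      ∀ k, (Rm d Z ^ k).trace = ∑ i, ((l i + d)⁻¹) ^ k) ∧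
    ((∀ i, l i ≠ 0) → ∀ k, ((Wm Z)⁻¹ ^ k).trace = ∑ i, ((l i)⁻¹) ^ k) := by
  obtain ⟨l, h0, h⟩ := spec Z
  refine ⟨l, h0, ?_, ?_, ?_⟩
  · rw [h, trace_conj, Matrix.trace_diagonal]
  · intro d hd
    have e : Wm Z + d • (1 : Matrix (Fin p) (Fin p) ℝ) = Unitary.conjStarAlgAut ℝ _ ((Matrix.isHermitian_conjTranspose_mul_self (Matrix.of Z)).eigenvectorUnitary) (diagonal fun i => l i + d) := by
      have : (diagonal fun i => l i + d) = diagonal l + d • (1 : Matrix (Fin p) (Fin p) ℝ) := by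
        rw [← Matrix.diagonal_one, ← Matrix.diagonal_smul, Matrix.diagonal_add]; simp
      rw [this, map_add, map_smul, map_one, ← h]
    have := inv_conj ((Matrix.isHermitian_conjTranspose_mul_self (Matrix.of Z)).eigenvectorUnitary) (fun i => l i + d) (fun i => by have := h0 i; positivity)
    rw [← e] at this
    refine ⟨this.1, fun k => ?_⟩
    rw [Rm, this.2, ← map_pow, trace_conj, Matrix.diagonal_pow, Matrix.trace_diagonal]
    rfl
  · intro hl k
    rw [h, (inv_conj _ l hl).2, ← map_pow, trace_conj, Matrix.diagonal_pow, Matrix.trace_diagonal]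
    rfl

theorem Rm_unit {n p : ℕ} (Z : Fin n → Fin p → ℝ) {d : ℝ} (hd : 0 < d) :
    IsUnit (Wm Z + d • (1 : Matrix (Fin p) (Fin p) ℝ)).det := by
  obtain ⟨l, _, _, h, _⟩ := spec2 Z
  exact (h d hd).1

theorem WR {n p : ℕ} (Z : Fin n → Fin p → ℝ) {d : ℝ} (hd : 0 < d) :
    Wm Z * Rm d Z = 1 - d • Rm d Z := by
  have := Matrix.mul_nonsing_inv _ (Rm_unit Z hd)
  rw [Matrix.add_mul] at this
  rw [Rm, eq_sub_iff_add_eq]; simpa using this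

theorem WR_pow {n p : ℕ} (Z : Fin n → Fin p → ℝ) {d : ℝ} (hd : 0 < d) (k : ℕ) :
    Wm Z * Rm d Z ^ (k+1) = Rm d Z ^ k - d • Rm d Z ^ (k+1) := by
  rw [pow_succ', ← Matrix.mul_assoc, WR Z hd, Matrix.sub_mul, Matrix.one_mul, smul_mul_assoc]

theorem trR_nonneg {n p : ℕ} (Z : Fin n → Fin p → ℝ) {d : ℝ} (hd : 0 < d) (k : ℕ) :
    0 ≤ (Rm d Z ^ k).trace := by
  obtain ⟨l, h0, _, h, _⟩ := spec2 Z
  rw [(h d hd).2]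
  exact Finset.sum_nonneg fun i _ => by have := h0 i; positivity

theorem trWR_le {n p : ℕ} (Z : Fin n → Fin p → ℝ) {d : ℝ} (hd : 0 < d) (k : ℕ) :
    (Wm Z * Rm d Z ^ (k+1)).trace ≤ (Rm d Z ^ k).trace := by
  rw [WR_pow Z hd, Matrix.trace_sub, Matrix.trace_smul, smul_eq_mul]
  have := trR_nonneg Z hd (k+1)
  nlinarith

theorem tr_cheb {n p : ℕ} (Z : Fin n → Fin p → ℝ) {d : ℝ} (hd : 0 < d) (a b : ℕ) :
    (Rm d Z ^ a).trace * (Rm d Z ^ b).trace ≤ p * (Rm d Z ^ (a+b)).trace := by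
  obtain ⟨l, h0, _, h, _⟩ := spec2 Z
  simp only [(h d hd).2]
  have hp : ∀ i, 0 ≤ (l i + d)⁻¹ := fun i => by have := h0 i; positivity
  have := (((monovaryOn_self (fun i => (l i + d)⁻¹) (Finset.univ : Finset (Fin p))).pow_left₀ (fun i _ => hp i) a).pow_right₀ (fun i _ => hp i) b).sum_mul_sum_le_card_mul_sum
  simpa [pow_add] using this

theorem Rm_symm {n p : ℕ} (Z : Fin n → Fin p → ℝ) (d : ℝ) : (Rm d Z)ᵀ = Rm d Z := by
  rw [Rm, Matrix.transpose_nonsing_inv]; simp [Wm]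

/-- uniformly bounded entries -/
def BM {X : Type*} {m n : ℕ} (f : X → Matrix (Fin m) (Fin n) ℝ) : Prop := ∃ C, ∀ Z i j, |f Z i j| ≤ C

theorem BM.mul {X : Type*} {m n l : ℕ} {f : X → Matrix (Fin m) (Fin n) ℝ} {g : X → Matrix (Fin n) (Fin l) ℝ}
    (hf : BM f) (hg : BM g) : BM (fun Z => f Z * g Z) := by
  obtain ⟨C, hC⟩ := hf
  obtain ⟨D, hD⟩ := hg
  refine ⟨n * (|C| * |D|), fun Z i j => ?_⟩
  change |(f Z * g Z) i j| ≤ _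
  rw [Matrix.mul_apply]
  refine (Finset.abs_sum_le_sum_abs _ _).trans ?_
  refine (Finset.sum_le_card_nsmul _ _ (|C| * |D|) fun k _ => ?_).trans (by simp)
  rw [abs_mul]
  exact mul_le_mul ((hC _ _ _).trans (le_abs_self _)) ((hD _ _ _).trans (le_abs_self _)) (abs_nonneg _) (abs_nonneg _)

theorem BM.transpose {X : Type*} {m n : ℕ} {f : X → Matrix (Fin m) (Fin n) ℝ} 
    (hf : BM f) : BM (fun Z => (f Z)ᵀ) := by
  obtain ⟨C, hC⟩ := hf
  exact ⟨C, fun Z i j => hC Z j i⟩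

theorem BM.pow {X : Type*} {m : ℕ} {f : X → Matrix (Fin m) (Fin m) ℝ} 
    (hf : BM f) (k : ℕ) : BM (fun Z => (f Z) ^ k) := by
  induction k with
  | zero => 
    refine ⟨1, fun Z i j => ?_⟩
    change |(f Z ^ 0) i j| ≤ _
    rw [pow_zero, Matrix.one_apply]; split_ifs <;> simp
  | succ k ih => simp only [pow_succ]; exact ih.mul hf

theorem sq_entry {m n : ℕ} (A : Matrix (Fin m) (Fin n) ℝ) (i j) : A i j ^ 2 ≤ (Aᵀ * A) j j := by
  rw [Matrix.mul_apply, pow_two]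
  exact Finset.single_le_sum (f := fun k => Aᵀ j k * A k j) (fun k _ => mul_self_nonneg _) (Finset.mem_univ i)

theorem diag_nn {m n : ℕ} (A : Matrix (Fin m) (Fin n) ℝ) (j) : 0 ≤ (Aᵀ * A) j j := by
  rw [Matrix.mul_apply]
  exact Finset.sum_nonneg (f := fun k => Aᵀ j k * A k j) (fun k _ => mul_self_nonneg _)

/-- R - d R^2 = (ZR)ᵀ (ZR) -/
theorem gramZR {n p : ℕ} (Z : Fin n → Fin p → ℝ) {d : ℝ} (hd : 0 < d) :
    (Matrix.of Z * Rm d Z)ᵀ * (Matrix.of Z * Rm d Z) = Rm d Z - d • ((Rm d Z)ᵀ * Rm d Z) := by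
  have := WR Z hd
  rw [Matrix.transpose_mul, Rm_symm, Matrix.mul_assoc, ← Matrix.mul_assoc (Matrix.of Z)ᵀ]
  change Rm d Z * (Wm Z * Rm d Z) = _
  rw [this, Matrix.mul_sub, Matrix.mul_one, Matrix.mul_smul]

theorem BM_R {n p : ℕ} {d : ℝ} (hd : 0 < d) : BM (fun Z : Fin n → Fin p → ℝ => Rm d Z) := by
  refine ⟨1/d, fun Z i j => ?_⟩
  have h1 := diag_nn (Matrix.of Z * Rm d Z) j
  rw [gramZR Z hd] at h1
  simp only [Matrix.sub_apply, Matrix.smul_apply, smul_eq_mul] at h1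
  have h2 := sq_entry (Rm d Z) i j
  have h3 := sq_entry (Rm d Z) j j
  have h4 : Rm d Z j j * d ≤ 1 := by
    by_contra! hc
    have : d * Rm d Z j j ^ 2 ≤ Rm d Z j j := by nlinarith
    have h5 : 0 < Rm d Z j j := by
      by_contra! hh
      nlinarith
    nlinarith
  have h6 : d * Rm d Z i j ^ 2 ≤ Rm d Z j j := by nlinarith
  have h7 : (d * Rm d Z i j) ^ 2 ≤ 1 := by nlinarith
  have h8 := (sq_le_one_iff_abs_le_one _).1 h7
  rw [abs_mul, abs_of_pos hd] at h8
  rw [le_div_iff₀ hd]; linarith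

theorem BM_ZR {n p : ℕ} {d : ℝ} (hd : 0 < d) : BM (fun Z : Fin n → Fin p → ℝ => Matrix.of Z * Rm d Z) := by
  obtain ⟨C, hC⟩ := BM_R (n := n) (p := p) hd
  refine ⟨1 + C, fun Z i j => ?_⟩
  have h1 := sq_entry (Matrix.of Z * Rm d Z) i j
  rw [gramZR Z hd] at h1
  simp only [Matrix.sub_apply, Matrix.smul_apply, smul_eq_mul] at h1
  have h2 := diag_nn (Rm d Z) j
  have h3 := le_abs_self (Rm d Z j j)
  have h4 : |Rm d Z j j| ≤ C := hC Z j j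
  have h5 := abs_nonneg (Rm d Z j j)
  refine abs_le_of_sq_le_sq ?_ (by linarith)
  change (Matrix.of Z * Rm d Z) i j ^ 2 ≤ _
  nlinarith [mul_nonneg hd.le h2]

theorem BM_ZRZ {n p : ℕ} {d : ℝ} (hd : 0 < d) : BM (fun Z : Fin n → Fin p → ℝ => Matrix.of Z * Rm d Z * (Matrix.of Z)ᵀ) := by
  refine ⟨1, fun Z i j => ?_⟩
  set A := Matrix.of Z * Rm d Z * (Matrix.of Z)ᵀ with hA
  have hs : Aᵀ = A := by simp [hA, Rm_symm, Matrix.mul_assoc]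
  have e : Aᵀ * A = A - d • ((Matrix.of Z * Rm d Z)ᵀᵀ * (Matrix.of Z * Rm d Z)ᵀ) := by
    rw [hs]
    have : A * A = Matrix.of Z * Rm d Z * (Wm Z * Rm d Z) * (Matrix.of Z)ᵀ := by
      simp only [hA, Wm, Matrix.mul_assoc]
    rw [this, WR Z hd]
    simp [Rm_symm, Matrix.mul_sub, Matrix.sub_mul, hA, Matrix.mul_assoc]
  have key : ∀ i j, A i j ^ 2 ≤ A j j := by
    intro i j
    have h1 := sq_entry A i j
    have h2 := diag_nn (Matrix.of Z * Rm d Z)ᵀ j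
    rw [e] at h1
    simp only [Matrix.sub_apply, Matrix.smul_apply, smul_eq_mul] at h1
    nlinarith
  have h1 := key j j
  have h2 : A j j ≤ 1 := by nlinarith
  have h3 := key i j
  exact (sq_le_one_iff_abs_le_one _).1 (h3.trans h2)

theorem BM_ZRk {n p : ℕ} {d : ℝ} (hd : 0 < d) (k : ℕ) :
    BM (fun Z : Fin n → Fin p → ℝ => Matrix.of Z * Rm d Z ^ (k+1)) := by
  have := (BM_ZR (n := n) (p := p) hd).mul ((BM_R hd).pow k)
  simpa only [pow_succ', Matrix.mul_assoc] using this

theorem BM_ZRkZ {n p : ℕ} {d : ℝ} (hd : 0 < d) (k : ℕ) :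
    BM (fun Z : Fin n → Fin p → ℝ => Matrix.of Z * Rm d Z ^ (k+1) * (Matrix.of Z)ᵀ) := by
  cases k with
  | zero => simpa using BM_ZRZ hd
  | succ k =>
    have := (BM_ZRk (n := n) (p := p) hd k).mul ((BM_ZR hd).transpose)
    simpa only [Matrix.transpose_mul, Rm_symm, pow_succ, Matrix.mul_assoc] using this

theorem cont_R {n p : ℕ} {d : ℝ} (hd : 0 < d) : Continuous (fun Z : Fin n → Fin p → ℝ => Rm d Z) := by
  have h1 : Continuous (fun Z : Fin n → Fin p → ℝ => (Matrix.of Z : Matrix (Fin n) (Fin p) ℝ)) := continuous_id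
  have h2 : Continuous (fun Z : Fin n → Fin p → ℝ => Wm Z + d • (1 : Matrix (Fin p) (Fin p) ℝ)) := by
    unfold Wm
    exact (h1.matrix_transpose.matrix_mul h1).add continuous_const
  unfold Rm
  simp only [Matrix.inv_def, Ring.inverse_eq_inv']
  exact (h2.matrix_det.inv₀ fun Z => (Rm_unit Z hd).ne_zero).smul h2.matrix_adjugate
instance probG (n p : ℕ) : IsProbabilityMeasure (gaussEnsemble n p) := by
  unfold gaussEnsemble; infer_instance

/-- the coordinate derivative of `(Z R^k) i j` in direction `(i,j)` -/
def FD {n p : ℕ} (d : ℝ) (k : ℕ) (i : Fin n) (j : Fin p) (Z : Fin n → Fin p → ℝ) : ℝ :=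
  (Rm d Z ^ k) j j - ∑ r ∈ Finset.range k,
    ((Matrix.of Z * Rm d Z ^ (r+1)) i j * (Matrix.of Z * Rm d Z ^ (k-r)) i j
      + (Matrix.of Z * Rm d Z ^ (r+1) * (Matrix.of Z)ᵀ) i i * (Rm d Z ^ (k-r)) j j)

theorem MD_curve {n p : ℕ} (Z : Fin n → Fin p → ℝ) (x : Fin p → ℝ) (i : Fin n) (j : Fin p) (t : ℝ) :
    MD (fun u => Matrix.of (Function.update Z i (Function.update x j u))) (Matrix.single i j 1) t := by
  intro a b
  by_cases ha : a = i
  · subst ha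
    by_cases hb : b = j
    · subst hb; simpa using hasDerivAt_id' t
    · have : j ≠ b := fun h => hb h.symm
      simpa [hb, Matrix.single_apply, this] using hasDerivAt_const t _
  · have : i ≠ a := fun h => ha h.symm
    simpa [ha, Matrix.single_apply, this] using hasDerivAt_const t _

theorem mul_single_mul {m n p q : ℕ} (A : Matrix (Fin m) (Fin n) ℝ) (B : Matrix (Fin p) (Fin q) ℝ) (i j a b) :
    (A * Matrix.single i j (1:ℝ) * B) a b = A a i * B j b := by
  rw [Matrix.mul_apply, Finset.sum_eq_single j]
  · simp
  · intro c _ hc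
    rw [Matrix.mul_single_apply_of_ne (hbj := hc)]; simp
  · simp

theorem deriv_F {n p : ℕ} {d : ℝ} (hd : 0 < d) (k : ℕ) (Z : Fin n → Fin p → ℝ) (x : Fin p → ℝ) (i : Fin n) (j : Fin p) (t : ℝ) :
    HasDerivAt (fun u => (Matrix.of (Function.update Z i (Function.update x j u))
        * Rm d (Function.update Z i (Function.update x j u)) ^ k) i j)
      (FD d k i j (Function.update Z i (Function.update x j t))) t := by
  have h1 := MD_curve Z x i j t
  have h2 := (h1.transpose.mul h1).add_const (d • (1 : Matrix (Fin p) (Fin p) ℝ))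
  have h3 := h2.inv (fun u => Rm_unit (Function.update Z i (Function.update x j u)) hd)
  have h4 := h1.mul (MD.pow h3 k) i j
  suffices key : ∀ Y : Fin n → Fin p → ℝ, FD d k i j Y = (Matrix.single i j (1:ℝ) * Rm d Y ^ k + Matrix.of Y * (-∑ r ∈ Finset.range k,
    Rm d Y ^ (r+1) * ((Matrix.single i j (1:ℝ))ᵀ * Matrix.of Y + (Matrix.of Y)ᵀ * Matrix.single i j (1:ℝ)) * Rm d Y ^ (k - r))) i j by
    rw [key]; exact h4
  intro Y
  change FD d k i j Y = (Matrix.single i j (1:ℝ) * Rm d Y ^ k + Matrix.of Y * (-∑ r ∈ Finset.range k,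
    Rm d Y ^ (r+1) * ((Matrix.single i j (1:ℝ))ᵀ * Matrix.of Y + (Matrix.of Y)ᵀ * Matrix.single i j (1:ℝ)) * Rm d Y ^ (k - r))) i j
  rw [FD, Matrix.add_apply, Matrix.mul_neg, Matrix.neg_apply, Matrix.mul_sum, Matrix.sum_apply, ← sub_eq_add_neg]
  congr 1
  · simp
  · refine Finset.sum_congr rfl fun r _ => ?_
    rw [Matrix.mul_add, Matrix.add_mul, Matrix.mul_add, Matrix.add_apply, Matrix.transpose_single]
    congr 1
    · rw [← mul_single_mul]; simp only [Matrix.mul_assoc]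
    · rw [← mul_single_mul]; simp only [Matrix.mul_assoc]

theorem FD_bdd {n p : ℕ} {d : ℝ} (hd : 0 < d) (k : ℕ) (i : Fin n) (j : Fin p) : ∃ C, ∀ Z, |FD d k i j Z| ≤ C := by
  have h1 : ∀ r : ℕ, ∃ C, ∀ Z : Fin n → Fin p → ℝ, |(Matrix.of Z * Rm d Z ^ (r+1)) i j| ≤ C := fun r => by
    obtain ⟨C, hC⟩ := BM_ZRk (n := n) (p := p) hd r
    exact ⟨C, fun Z => hC Z i j⟩
  have h2 : ∀ r : ℕ, ∃ C, ∀ Z : Fin n → Fin p → ℝ, |(Matrix.of Z * Rm d Z ^ (r+1) * (Matrix.of Z)ᵀ) i i| ≤ C := fun r => by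
    obtain ⟨C, hC⟩ := BM_ZRkZ (n := n) (p := p) hd r
    exact ⟨C, fun Z => hC Z i i⟩
  have h3 : ∀ r : ℕ, ∃ C, ∀ Z : Fin n → Fin p → ℝ, |(Rm d Z ^ r) j j| ≤ C := fun r => by
    obtain ⟨C, hC⟩ := (BM_R (n := n) (p := p) hd).pow r
    exact ⟨C, fun Z => hC Z j j⟩
  choose A hA using h1
  choose B hB using h2
  choose D hD using h3
  refine ⟨D k + ∑ r ∈ Finset.range k, (A r * A (k - r - 1) + B r * D (k-r)), fun Z => ?_⟩
  unfold FD
  refine (abs_sub _ _).trans (add_le_add (hD k Z) ((Finset.abs_sum_le_sum_abs _ _).trans (Finset.sum_le_sum fun r hr => ?_)))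
  refine (abs_add_le _ _).trans (add_le_add ?_ ?_)
  · rw [abs_mul]
    have e : k - r = k - r - 1 + 1 := by have := Finset.mem_range.1 hr; omega
    refine mul_le_mul (hA r Z) ?_ (abs_nonneg _) ((abs_nonneg _).trans (hA r Z))
    rw [e]; exact hA _ Z
  · rw [abs_mul]
    exact mul_le_mul (hB r Z) (hD _ Z) (abs_nonneg _) ((abs_nonneg _).trans (hB r Z))

theorem cont_of {n p : ℕ} : Continuous (fun Z : Fin n → Fin p → ℝ => (Matrix.of Z : Matrix (Fin n) (Fin p) ℝ)) := continuous_id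

theorem cont_ZRk {n p : ℕ} {d : ℝ} (hd : 0 < d) (k : ℕ) (i : Fin n) (j : Fin p) :
    Continuous (fun Z : Fin n → Fin p → ℝ => (Matrix.of Z * Rm d Z ^ k) i j) :=
  (cont_of.matrix_mul ((cont_R hd).pow k)).matrix_elem i j

theorem cont_FD {n p : ℕ} {d : ℝ} (hd : 0 < d) (k : ℕ) (i : Fin n) (j : Fin p) : Continuous (FD d k i j) := by
  unfold FD
  refine (((cont_R hd).pow k).matrix_elem j j).sub (continuous_finsetSum _ fun r _ => ?_)
  refine ((cont_ZRk hd _ i j).mul (cont_ZRk hd _ i j)).add ?_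
  exact (((cont_of.matrix_mul ((cont_R hd).pow _)).matrix_mul cont_of.matrix_transpose).matrix_elem i i).mul
    (((cont_R hd).pow _).matrix_elem j j)

theorem mp_entry {n p : ℕ} (i : Fin n) (j : Fin p) :
    MeasurePreserving (fun Z : Fin n → Fin p → ℝ => Z i j) (gaussEnsemble n p) (ProbabilityTheory.gaussianReal 0 1) :=
  (measurePreserving_eval (fun _ : Fin p => ProbabilityTheory.gaussianReal 0 1) j).comp
    (measurePreserving_eval (fun _ : Fin n => Measure.pi fun _ : Fin p => ProbabilityTheory.gaussianReal 0 1) i)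

theorem int_id : Integrable (fun t : ℝ => t) (ProbabilityTheory.gaussianReal 0 1) :=
  (ProbabilityTheory.memLp_id_gaussianReal (μ := 0) (v := 1) 1).integrable (by simp)

theorem int_entry {n p : ℕ} (i : Fin n) (j : Fin p) :
    Integrable (fun Z : Fin n → Fin p → ℝ => Z i j) (gaussEnsemble n p) :=
  (mp_entry i j).integrable_comp_of_integrable int_id

theorem int_ZF {n p : ℕ} {d : ℝ} (hd : 0 < d) (k : ℕ) (i : Fin n) (j : Fin p) :
    Integrable (fun Z : Fin n → Fin p → ℝ => Z i j * (Matrix.of Z * Rm d Z ^ (k+1)) i j) (gaussEnsemble n p) := by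
  obtain ⟨C, hC⟩ := BM_ZRk (n := n) (p := p) hd k
  exact (int_entry i j).mul_bdd (c := C) (cont_ZRk hd _ i j).aestronglyMeasurable (ae_of_all _ fun Z => hC Z i j)

theorem int_FD {n p : ℕ} {d : ℝ} (hd : 0 < d) (k : ℕ) (i : Fin n) (j : Fin p) :
    Integrable (FD d k i j) (gaussEnsemble n p) := by
  obtain ⟨C, hC⟩ := FD_bdd hd k i j
  exact Integrable.of_bound (cont_FD hd k i j).aestronglyMeasurable C (ae_of_all _ hC)

theorem ibp {n p : ℕ} {d : ℝ} (hd : 0 < d) (k : ℕ) (i : Fin n) (j : Fin p) :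
    ∫ Z, Z i j * (Matrix.of Z * Rm d Z ^ (k+1)) i j ∂(gaussEnsemble n p) = ∫ Z, FD d (k+1) i j Z ∂(gaussEnsemble n p) := by
  obtain ⟨C1, hC1⟩ := BM_ZRk (n := n) (p := p) hd k
  obtain ⟨C2, hC2⟩ := FD_bdd hd (k+1) i j
  rw [← sub_eq_zero, ← integral_sub (int_ZF hd k i j) (int_FD hd _ i j)]
  refine int_zero (fun _ : Fin n => Measure.pi fun _ : Fin p => ProbabilityTheory.gaussianReal 0 1) i _
    ((int_ZF hd k i j).sub (int_FD hd _ i j)) fun Z => ?_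
  have cu : Continuous (fun x : Fin p → ℝ => Function.update Z i x) := continuous_const.update i continuous_id
  refine int_zero (fun _ : Fin p => ProbabilityTheory.gaussianReal 0 1) j _ ?_ fun x => ?_
  · simp only [Function.update_self]
    refine Integrable.sub ?_ ?_
    · refine Integrable.mul_bdd (c := C1) ?_ ((cont_ZRk hd _ i j).comp cu).aestronglyMeasurable (ae_of_all _ fun x => hC1 (Function.update Z i x) i j)
      exact (measurePreserving_eval (fun _ : Fin p => ProbabilityTheory.gaussianReal 0 1) j).integrable_comp_of_integrable int_id
    · exact Integrable.of_bound ((cont_FD hd _ i j).comp cu).aestronglyMeasurable C2 (ae_of_all _ fun x => hC2 _)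
  · simp only [Function.update_self]
    have cu2 : Continuous (fun t : ℝ => Function.update Z i (Function.update x j t)) :=
      cu.comp (continuous_const.update j continuous_id)
    exact stein1 _ _ (deriv_F hd (k+1) Z x i j) (max C1 C2) (fun t => (hC1 _ i j).trans (le_max_left _ _))
      (fun t => (hC2 _).trans (le_max_right _ _)) ((cont_FD hd _ i j).comp cu2).measurable

theorem sum_ZF {n p : ℕ} (Z : Fin n → Fin p → ℝ) (A : Matrix (Fin p) (Fin p) ℝ) :
    ∑ i, ∑ j, Z i j * (Matrix.of Z * A) i j = (Wm Z * A).trace := by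
  rw [Wm, Matrix.mul_assoc, Matrix.trace]
  simp only [Matrix.diag_apply]
  rw [Finset.sum_comm]
  refine Finset.sum_congr rfl fun j _ => ?_
  rw [Matrix.mul_apply]; rfl

theorem sum_AB {n p : ℕ} (A B : Matrix (Fin n) (Fin p) ℝ) :
    ∑ i, ∑ j, A i j * B i j = (Aᵀ * B).trace := by
  rw [Matrix.trace]
  simp only [Matrix.diag_apply]
  rw [Finset.sum_comm]
  refine Finset.sum_congr rfl fun j _ => ?_
  rw [Matrix.mul_apply]; rfl

theorem sum_FD {n p : ℕ} (d : ℝ) (k : ℕ) (Z : Fin n → Fin p → ℝ) :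
    ∑ i, ∑ j, FD d k i j Z = n * (Rm d Z ^ k).trace - ∑ r ∈ Finset.range k,
      ((Wm Z * Rm d Z ^ (k+1)).trace + (Wm Z * Rm d Z ^ (r+1)).trace * (Rm d Z ^ (k-r)).trace) := by
  unfold FD
  simp only [Finset.sum_sub_distrib]
  congr 1
  · simp [Matrix.trace]
  · have : ∀ i : Fin n, ∑ j : Fin p, ∑ r ∈ Finset.range k,
      ((Matrix.of Z * Rm d Z ^ (r+1)) i j * (Matrix.of Z * Rm d Z ^ (k-r)) i j
      + (Matrix.of Z * Rm d Z ^ (r+1) * (Matrix.of Z)ᵀ) i i * (Rm d Z ^ (k-r)) j j) =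
       ∑ r ∈ Finset.range k, ∑ j : Fin p,
      ((Matrix.of Z * Rm d Z ^ (r+1)) i j * (Matrix.of Z * Rm d Z ^ (k-r)) i j
      + (Matrix.of Z * Rm d Z ^ (r+1) * (Matrix.of Z)ᵀ) i i * (Rm d Z ^ (k-r)) j j) := fun i => Finset.sum_comm
    simp only [this]
    rw [Finset.sum_comm]
    refine Finset.sum_congr rfl fun r hr => ?_
    simp only [Finset.sum_add_distrib]
    congr 1
    · rw [sum_AB, Matrix.transpose_mul, Matrix.transpose_pow, Rm_symm, Matrix.mul_assoc, Matrix.trace_mul_comm,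
        ← Matrix.mul_assoc (Matrix.of Z)ᵀ, Matrix.mul_assoc, ← pow_add]
      have : k - r + (r + 1) = k + 1 := by have := Finset.mem_range.1 hr; omega
      rw [this]; rfl
    · simp only [← Finset.mul_sum, ← Finset.sum_mul]
      congr 1
      change (Matrix.of Z * Rm d Z ^ (r+1) * (Matrix.of Z)ᵀ).trace = _
      rw [Matrix.trace_mul_comm, ← Matrix.mul_assoc]; rfl

theorem int_T {n p : ℕ} {d : ℝ} (hd : 0 < d) (k : ℕ) :
    Integrable (fun Z : Fin n → Fin p → ℝ => (Rm d Z ^ k).trace) (gaussEnsemble n p) := by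
  obtain ⟨C, hC⟩ := (BM_R (n := n) (p := p) hd).pow k
  unfold Matrix.trace
  refine integrable_finsetSum _ fun j _ => ?_
  exact Integrable.of_bound (((cont_R hd).pow k).matrix_elem j j).aestronglyMeasurable C (ae_of_all _ fun Z => hC Z j j)

theorem step {n p : ℕ} {d : ℝ} (hd : 0 < d) (k : ℕ) :
    ((n : ℝ) - (k+1) * (p+1)) * ∫ Z, (Rm d Z ^ (k+1)).trace ∂(gaussEnsemble n p) ≤
      ∫ Z, (Rm d Z ^ k).trace ∂(gaussEnsemble n p) := by
  have i1 : Integrable (fun Z : Fin n → Fin p → ℝ => ∑ i, ∑ j, FD d (k+1) i j Z) (gaussEnsemble n p) :=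
    integrable_finsetSum _ fun i _ => integrable_finsetSum _ fun j _ => int_FD hd _ i j
  have i2 : Integrable (fun Z : Fin n → Fin p → ℝ => ∑ i, ∑ j, Z i j * (Matrix.of Z * Rm d Z ^ (k+1)) i j) (gaussEnsemble n p) :=
    integrable_finsetSum _ fun i _ => integrable_finsetSum _ fun j _ => int_ZF hd _ i j
  have e : ∫ Z, ∑ i, ∑ j, Z i j * (Matrix.of Z * Rm d Z ^ (k+1)) i j ∂(gaussEnsemble n p) =
      ∫ Z, ∑ i, ∑ j, FD d (k+1) i j Z ∂(gaussEnsemble n p) := by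
    rw [integral_finsetSum _ fun i _ => integrable_finsetSum _ fun j _ => int_ZF hd _ i j,
      integral_finsetSum _ fun i _ => integrable_finsetSum _ fun j _ => int_FD hd _ i j]
    refine Finset.sum_congr rfl fun i _ => ?_
    rw [integral_finsetSum _ fun j _ => int_ZF hd _ i j,
      integral_finsetSum _ fun j _ => int_FD hd _ i j]
    exact Finset.sum_congr rfl fun j _ => ibp hd k i j
  rw [← integral_const_mul]
  calc _ ≤ ∫ Z, ∑ i, ∑ j, FD d (k+1) i j Z ∂(gaussEnsemble n p) := by
        refine integral_mono ((int_T hd _).const_mul _) i1 fun Z => ?_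
        change ((n : ℝ) - (k+1) * (p+1)) * (Rm d Z ^ (k+1)).trace ≤ ∑ i, ∑ j, FD d (k+1) i j Z
        rw [sum_FD]
        have : ∑ r ∈ Finset.range (k+1),
          ((Wm Z * Rm d Z ^ (k+1+1)).trace + (Wm Z * Rm d Z ^ (r+1)).trace * (Rm d Z ^ (k+1-r)).trace)
           ≤ ∑ r ∈ Finset.range (k+1), ((p+1) * (Rm d Z ^ (k+1)).trace) := by
          refine Finset.sum_le_sum fun r hr => ?_
          have h1 := trWR_le Z hd (k+1)
          have h2 := mul_le_mul_of_nonneg_right (trWR_le Z hd r) (trR_nonneg Z hd (k+1-r))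
          have h3 := tr_cheb Z hd r (k+1-r)
          have e : r + (k + 1 - r) = k + 1 := by have := Finset.mem_range.1 hr; omega
          rw [e] at h3
          linarith
        rw [Finset.sum_const, Finset.card_range, nsmul_eq_mul] at this
        push_cast at this
        linarith
    _ = _ := e.symm
    _ ≤ _ := by
        refine integral_mono i2 (int_T hd _) fun Z => ?_
        change ∑ i, ∑ j, Z i j * (Matrix.of Z * Rm d Z ^ (k+1)) i j ≤ (Rm d Z ^ k).trace
        rw [sum_ZF]; exact trWR_le Z hd k

theorem bound {n p : ℕ} {d : ℝ} (hd : 0 < d) (s : ℕ) (hn : 0 < (n : ℝ) - s * (p+1)) (k : ℕ) (hk : k ≤ s) :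
    ∫ Z, (Rm d Z ^ k).trace ∂(gaussEnsemble n p) ≤ p / ((n : ℝ) - s * (p+1)) ^ k := by
  induction k with
  | zero => simp
  | succ k ih =>
    have h1 := step (n := n) (p := p) hd k
    have h2 := ih (by omega)
    have h0 : 0 ≤ ∫ Z, (Rm d Z ^ (k+1)).trace ∂(gaussEnsemble n p) := integral_nonneg fun Z => trR_nonneg Z hd _
    have hk' : ((k:ℝ) + 1) ≤ s := by exact_mod_cast hk
    have h3 : (n : ℝ) - s * (p+1) ≤ (n : ℝ) - (k+1) * (p+1) := by
      have : (0:ℝ) ≤ (p:ℝ) + 1 := by positivity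
      nlinarith
    have h4 := mul_le_mul_of_nonneg_right h3 h0
    rw [pow_succ, ← div_div, le_div_iff₀ hn]
    linarith
theorem upper {n p : ℕ} (s : ℕ) (hs : 1 ≤ s) (hn : 0 < (n : ℝ) - s * (p+1)) :
    (∀ᵐ Z ∂(gaussEnsemble n p), ∃ l : Fin p → ℝ, (∀ i, 0 < l i) ∧ (Wm Z).trace = ∑ i, l i ∧
      ((Wm Z)⁻¹ ^ s).trace = ∑ i, ((l i)⁻¹) ^ s) ∧
    Integrable (fun Z : Fin n → Fin p → ℝ => ((Wm Z)⁻¹ ^ s).trace) (gaussEnsemble n p) ∧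
    ∫ Z, ((Wm Z)⁻¹ ^ s).trace ∂(gaussEnsemble n p) ≤ p / ((n : ℝ) - s * (p+1)) ^ s := by
  set C : ℝ := p / ((n : ℝ) - s * (p+1)) ^ s with hC
  have hC0 : 0 ≤ C := by positivity
  set δ : ℕ → ℝ := fun m => 1 / ((m : ℝ) + 1) with hδ
  have hδp : ∀ m, 0 < δ m := fun m => by positivity
  have hδ0 : Tendsto δ atTop (nhds 0) := tendsto_one_div_add_atTop_nhds_zero_nat
  set h : ℕ → (Fin n → Fin p → ℝ) → ℝ := fun m Z => (Rm (δ m) Z ^ s).trace with hh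
  have hmeas : ∀ m, Measurable (h m) := fun m => ((cont_R (hδp m)).pow s).matrix_trace.measurable
  have hfat : ∫⁻ Z, liminf (fun m => ENNReal.ofReal (h m Z)) atTop ∂(gaussEnsemble n p) ≤ ENNReal.ofReal C := by
    refine (lintegral_liminf_le fun m => (hmeas m).ennreal_ofReal).trans ?_
    refine (liminf_le_liminf (v := fun _ => ENNReal.ofReal C) (Eventually.of_forall fun m => ?_)).trans (by simp)
    change ∫⁻ Z, ENNReal.ofReal (h m Z) ∂(gaussEnsemble n p) ≤ ENNReal.ofReal C
    rw [← ofReal_integral_eq_lintegral_ofReal (int_T (hδp m) s) (ae_of_all _ fun Z => trR_nonneg Z (hδp m) s)]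
    exact ENNReal.ofReal_le_ofReal (bound (hδp m) s hn s le_rfl)
  have hlt := ae_lt_top (Measurable.liminf fun m => (hmeas m).ennreal_ofReal) (hfat.trans_lt ENNReal.ofReal_lt_top).ne
  have hae : ∀ᵐ Z ∂(gaussEnsemble n p), (∃ l : Fin p → ℝ, (∀ i, 0 < l i) ∧ (Wm Z).trace = ∑ i, l i ∧
      ((Wm Z)⁻¹ ^ s).trace = ∑ i, ((l i)⁻¹) ^ s) ∧ Tendsto (fun m => h m Z) atTop (nhds ((Wm Z)⁻¹ ^ s).trace) := by
    filter_upwards [hlt] with Z hZ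
    obtain ⟨l, h0, h1, h2, h3⟩ := spec2 Z
    have hpos : ∀ i, 0 < l i := by
      intro i
      refine lt_of_le_of_ne (h0 i) fun hi => ?_
      refine hZ.ne (Tendsto.liminf_eq (ENNReal.tendsto_ofReal_nhds_top.2 ?_))
      refine tendsto_atTop_mono (fun m => ?_) (tendsto_natCast_atTop_atTop (R := ℝ))
      have e : h m Z = _ := (h2 (δ m) (hδp m)).2 s
      rw [e]
      have hle := Finset.single_le_sum (f := fun i => ((l i + δ m)⁻¹) ^ s) (fun k _ => by have := h0 k; have := hδp m; positivity) (Finset.mem_univ i)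
      refine le_trans ?_ hle
      have : (l i + δ m)⁻¹ = (m : ℝ) + 1 := by simp [← hi, hδ]
      simp only [this]
      have h5 : (m : ℝ) + 1 ≤ ((m : ℝ) + 1) ^ s := le_self_pow₀ (by linarith [(Nat.cast_nonneg m : (0:ℝ) ≤ m)]) (by omega)
      linarith
    have h3' := h3 (fun i => (hpos i).ne') s
    refine ⟨⟨l, hpos, h1, h3'⟩, ?_⟩
    rw [h3']
    have e : (fun m => h m Z) = fun m => ∑ i, ((l i + δ m)⁻¹) ^ s := by
      ext m; exact (h2 (δ m) (hδp m)).2 s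
    rw [e]
    refine tendsto_finsetSum _ fun i _ => ?_
    have : Tendsto (fun m => l i + δ m) atTop (nhds (l i)) := by simpa using hδ0.const_add (l i)
    exact (this.inv₀ (hpos i).ne').pow s
  have hsm : AEMeasurable (fun Z : Fin n → Fin p → ℝ => ((Wm Z)⁻¹ ^ s).trace) (gaussEnsemble n p) :=
    aemeasurable_of_tendsto_metrizable_ae atTop (fun m => (hmeas m).aemeasurable) (hae.mono fun Z hZ => hZ.2)
  have hnn : 0 ≤ᵐ[gaussEnsemble n p] (fun Z : Fin n → Fin p → ℝ => ((Wm Z)⁻¹ ^ s).trace) := by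
    filter_upwards [hae] with Z hZ
    obtain ⟨⟨l, hl, _, h3⟩, _⟩ := hZ
    change 0 ≤ ((Wm Z)⁻¹ ^ s).trace
    rw [h3]; exact Finset.sum_nonneg fun i _ => by have := hl i; positivity
  have hlint : ∫⁻ Z, ENNReal.ofReal ((Wm Z)⁻¹ ^ s).trace ∂(gaussEnsemble n p) ≤ ENNReal.ofReal C := by
    refine le_trans (le_of_eq (lintegral_congr_ae ?_)) hfat
    filter_upwards [hae] with Z hZ
    exact ((ENNReal.tendsto_ofReal hZ.2).liminf_eq).symm
  refine ⟨hae.mono fun Z hZ => hZ.1, ⟨hsm.aestronglyMeasurable, ?_⟩, ?_⟩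
  · rw [hasFiniteIntegral_iff_ofReal hnn]; exact hlint.trans_lt ENNReal.ofReal_lt_top
  · rw [integral_eq_lintegral_of_nonneg_ae hnn hsm.aestronglyMeasurable]
    exact ENNReal.toReal_le_of_le_ofReal hC0 hlint

theorem inv_smul_all {p : ℕ} (c : ℝ) (hc : c ≠ 0) (A : Matrix (Fin p) (Fin p) ℝ) : (c • A)⁻¹ = c⁻¹ • A⁻¹ := by
  have hd : (c • A).det = c ^ p * A.det := by simp
  by_cases h : IsUnit A.det
  · refine Matrix.inv_eq_right_inv ?_
    rw [Matrix.smul_mul, Matrix.mul_smul, Matrix.mul_nonsing_inv _ h, smul_smul, mul_inv_cancel₀ hc, one_smul]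
  · rw [Matrix.nonsing_inv_apply_not_isUnit _ h, Matrix.nonsing_inv_apply_not_isUnit]
    · simp
    · rw [hd]; simpa [hc] using h

theorem tr_wishart {n p : ℕ} (hn : n ≠ 0) (s : ℕ) (Z : Fin n → Fin p → ℝ) :
    ((wishartOf Z)⁻¹ ^ s).trace = (n : ℝ) ^ s * ((Wm Z)⁻¹ ^ s).trace := by
  have : wishartOf Z = (n : ℝ)⁻¹ • Wm Z := rfl
  rw [this, inv_smul_all _ (by simpa using hn), smul_pow, Matrix.trace_smul, inv_inv, smul_eq_mul]

theorem int_sq : Integrable (fun t : ℝ => t * t) (ProbabilityTheory.gaussianReal 0 1) ∧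
    ∫ t : ℝ, t * t ∂(ProbabilityTheory.gaussianReal 0 1) = 1 := by
  have h := ProbabilityTheory.memLp_id_gaussianReal (μ := 0) (v := 1) 2
  refine ⟨by simpa [pow_two] using h.integrable_sq, ?_⟩
  have h2 := ProbabilityTheory.variance_id_gaussianReal (μ := 0) (v := 1)
  rw [ProbabilityTheory.variance_eq_sub h] at h2
  simpa [pow_two] using h2

theorem trW {n p : ℕ} : Integrable (fun Z : Fin n → Fin p → ℝ => (Wm Z).trace) (gaussEnsemble n p) ∧
    ∫ Z, (Wm Z).trace ∂(gaussEnsemble n p) = n * p := by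
  have e : ∀ Z : Fin n → Fin p → ℝ, (Wm Z).trace = ∑ i, ∑ j, Z i j * Z i j := by
    intro Z; have := sum_ZF Z 1; simpa using this.symm
  have i1 : ∀ i j, Integrable (fun Z : Fin n → Fin p → ℝ => Z i j * Z i j) (gaussEnsemble n p) := fun i j =>
    (mp_entry i j).integrable_comp_of_integrable int_sq.1
  simp only [e]
  refine ⟨integrable_finsetSum _ fun i _ => integrable_finsetSum _ fun j _ => i1 i j, ?_⟩
  rw [integral_finsetSum _ fun i _ => integrable_finsetSum _ fun j _ => i1 i j]
  have : ∀ i, ∫ Z, ∑ j, Z i j * Z i j ∂(gaussEnsemble n p) = p := by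
    intro i
    rw [integral_finsetSum _ fun j _ => i1 i j]
    have : ∀ j, ∫ Z, Z i j * Z i j ∂(gaussEnsemble n p) = 1 := by
      intro j
      have hm := mp_entry i j (n := n) (p := p)
      have h := int_sq.2
      rw [← hm.map_eq, integral_map hm.measurable.aemeasurable (by fun_prop)] at h
      exact h
    simp [this]
  simp [this]

theorem tangent (s : ℕ) (x : ℝ) (hx : 0 < x) : 1 - s * (x - 1) ≤ (x⁻¹) ^ s := by
  have h1 := one_add_mul_sub_le_pow (a := x⁻¹) (by have : 0 < x⁻¹ := by positivity
                                                   linarith) s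
  have h2 : 1 - x ≤ x⁻¹ - 1 := by
    have : x * x⁻¹ = 1 := mul_inv_cancel₀ hx.ne'
    have h3 : 0 < x⁻¹ := by positivity
    nlinarith [sq_nonneg (x - 1), mul_nonneg h3.le (sq_nonneg (x-1))]
  have h3 := mul_le_mul_of_nonneg_left h2 (Nat.cast_nonneg s : (0:ℝ) ≤ s)
  linarith

theorem lower {n p : ℕ} (s : ℕ) (hs : 1 ≤ s) (hn : 0 < (n : ℝ) - s * (p+1)) :
    (p : ℝ) ≤ ∫ Z, (n : ℝ) ^ s * ((Wm Z)⁻¹ ^ s).trace ∂(gaussEnsemble n p) := by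
  obtain ⟨hae, hint, _⟩ := upper (n := n) (p := p) s hs hn
  obtain ⟨hi, he⟩ := trW (n := n) (p := p)
  have hn0 : (0:ℝ) < n := by
    have : (0:ℝ) ≤ s * (p+1) := by positivity
    linarith
  have : ∫ Z, ((p : ℝ) - s * ((n:ℝ)⁻¹ * (Wm Z).trace - p)) ∂(gaussEnsemble n p) = p := by
    have j1 : Integrable (fun Z : Fin n → Fin p → ℝ => (n:ℝ)⁻¹ * (Wm Z).trace - p) (gaussEnsemble n p) :=
      (hi.const_mul _).sub (integrable_const _)
    rw [integral_sub (integrable_const _) (j1.const_mul _),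
      integral_const_mul, integral_sub (hi.const_mul _) (integrable_const _), integral_const_mul, he]
    have e : (n:ℝ)⁻¹ * (n * p) = p := by field_simp
    rw [e]
    simp
  rw [← this]
  refine integral_mono_ae ((integrable_const _).sub (((hi.const_mul _).sub (integrable_const _)).const_mul _)) (hint.const_mul _) ?_
  filter_upwards [hae] with Z hZ
  obtain ⟨l, hl, h1, h2⟩ := hZ
  rw [h1, h2, Finset.mul_sum, Finset.mul_sum]
  have : (p : ℝ) - s * (∑ i, (n:ℝ)⁻¹ * l i - p) = ∑ i : Fin p, (1 - s * ((n:ℝ)⁻¹ * l i - 1)) := by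
    simp [Finset.sum_sub_distrib, ← Finset.mul_sum]
  rw [this]
  refine Finset.sum_le_sum fun i _ => ?_
  refine (tangent s ((n:ℝ)⁻¹ * l i) (by have := hl i; positivity)).trans (le_of_eq ?_)
  rw [mul_inv, inv_inv, mul_pow]

/-- If `s ≥ 1`, `p(n) → ∞` and `p(n)/n → 0`, then
`(1/p(n)) E[tr(Y^{-s})] → 1` as `n → ∞`. -/
theorem inverse_wishart_trace_limit (s : ℕ) (hs : 1 ≤ s) (p : ℕ → ℕ)
    (hpinf : Filter.Tendsto (fun n => (p n : ℝ)) Filter.atTop Filter.atTop)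
    (h0 : Filter.Tendsto (fun n => (p n : ℝ) / (n : ℝ)) Filter.atTop (nhds 0)) :
    Filter.Tendsto (fun n =>
      (1 / (p n : ℝ)) *
        ∫ Z, Matrix.trace ((wishartOf Z)⁻¹ ^ s) ∂gaussEnsemble n (p n))
      Filter.atTop (nhds 1) := by
  have hq : Tendsto (fun n : ℕ => 1 - s * ((p n : ℝ) / n + 1 / (n:ℝ))) atTop (nhds 1) := by
    have := ((h0.add tendsto_one_div_atTop_nhds_zero_nat).const_mul (s:ℝ)).const_sub 1
    simpa using this
  have hU : Tendsto (fun n : ℕ => ((1 - s * ((p n : ℝ) / n + 1 / (n:ℝ)))⁻¹) ^ s) atTop (nhds 1) := by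
    simpa using (hq.inv₀ one_ne_zero).pow s
  have ev : ∀ᶠ n : ℕ in atTop, 0 < n ∧ 0 < (p n : ℝ) ∧ 0 < (n : ℝ) - s * (p n + 1) ∧
      (n : ℝ) - s * (p n + 1) = n * (1 - s * ((p n : ℝ) / n + 1 / (n:ℝ))) := by
    filter_upwards [eventually_gt_atTop 0, hpinf.eventually_gt_atTop 0, hq.eventually (lt_mem_nhds one_pos)] with n h1 h2 h3
    have h1' : (0:ℝ) < n := by exact_mod_cast h1
    have e : (n : ℝ) - s * (p n + 1) = n * (1 - s * ((p n : ℝ) / n + 1 / (n:ℝ))) := by field_simp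
    exact ⟨h1, h2, by rw [e]; positivity, e⟩
  refine tendsto_of_tendsto_of_tendsto_of_le_of_le' tendsto_const_nhds hU ?_ ?_
  · filter_upwards [ev] with n ⟨h1, h2, h3, _⟩
    simp only [tr_wishart h1.ne' s]
    have := lower s hs h3
    rw [one_div, ← div_eq_inv_mul, le_div_iff₀ h2]; linarith
  · filter_upwards [ev] with n ⟨h1, h2, h3, h4⟩
    simp only [tr_wishart h1.ne' s]
    rw [integral_const_mul]
    have h5 := (upper s hs h3).2.2
    have h1' : (0:ℝ) < n := by exact_mod_cast h1
    have h6 := mul_le_mul_of_nonneg_left h5 (pow_pos h1' s).le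
    rw [one_div, ← div_eq_inv_mul, div_le_iff₀ h2]
    refine h6.trans (le_of_eq ?_)
    have hne : (1 - s * ((p n : ℝ) / n + 1 / (n:ℝ))) ≠ 0 := by
      intro hz; rw [h4, hz] at h3; simp at h3
    rw [h4, mul_pow, inv_pow]
    have hn2 : (n:ℝ) ^ s ≠ 0 := by positivity
    generalize (1 - s * ((p n : ℝ) / n + 1 / (n:ℝ))) = q at hne ⊢
    have hq2 : q ^ s ≠ 0 := pow_ne_zero _ hne
    field_simp
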